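/- arXiv:1909.04441 — 2 statements merged into one kernel-verified Lean document; each statement's English description precedes it below -/
import Mathlib

section
/- Let p be a prime number. In ℤ[u]: (a) for all a ≥ 1 and 0 ≤ i ≤ pa with p ∤ i, the q-integer (p)_u divides the Gaussian binomial coefficient C(pa, i)_u; (b) for all 0 ≤ b ≤ a, C(pa, pb)_u ≡ binom(a,b) (mod (p)_u·ℤ[u]), where binom(a,b) ∈ ℤ is the ordinary binomial coefficient (the q-Lucas congruences modulo (p)_u). -/
/-!
Let `q` be a primitive `n`-th root of unity in a domain. By absorption,
`(j)_q C(n, j)_q = (n)_q C(n-1, j-1)_q = 0` for `0 < j < n`, while `(j)_q ≠ 0`. So the row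
polynomial `F_m(T) = ∑ₖ C(m, k)_q T^k` satisfies `F_n = 1 + T^n`. The defining recurrence reads
`F_{m+1}(T) = F_m(qT) + T F_m(T)`, and since `q^n = 1` the operator on the right commutes with
multiplication by `1 + T^n`. Hence `F_{m+n} = (1 + T^n) F_m`, so `F_{na+r} = (1 + T^n)^a F_r`, and
comparing coefficients gives `C(na+r, nb+s)_q = binom(a, b) C(r, s)_q`. Taking `q` complex turns
this into a congruence modulo its minimal polynomial `Φ_n`, which is `(p)_u` when `n = p` is prime.
-/

/-- The `q`-integer `(n)_q = 1 + q + ⋯ + q^{n-1}`. -/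
def qInt {S : Type*} [CommRing S] (q : S) (n : ℕ) : S :=
  ∑ i ∈ Finset.range n, q ^ i

/-- The Gaussian binomial coefficient `C(n,k)_u ∈ ℤ[u]`. -/
noncomputable def gbinom : ℕ → ℕ → Polynomial ℤ
  | _, 0 => 1
  | 0, _ + 1 => 0
  | n + 1, k + 1 => Polynomial.X ^ (k + 1) * gbinom n (k + 1) + gbinom n k
  termination_by n _ => n

open Polynomial

@[simp]
lemma gbinom_zero_right (n : ℕ) : gbinom n 0 = 1 := by
  simp [gbinom]

@[simp]
lemma gbinom_zero_succ (k : ℕ) : gbinom 0 (k + 1) = 0 := by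
  simp [gbinom]

lemma gbinom_succ_succ (n k : ℕ) :
    gbinom (n + 1) (k + 1) = X ^ (k + 1) * gbinom n (k + 1) + gbinom n k := by
  rw [gbinom]

lemma gbinom_eq_zero_of_lt {n k : ℕ} (h : n < k) : gbinom n k = 0 := by
  induction n generalizing k with
  | zero =>
    obtain ⟨k, rfl⟩ := Nat.exists_eq_add_one.mpr h
    exact gbinom_zero_succ k
  | succ n ih =>
    obtain ⟨k, rfl⟩ := Nat.exists_eq_add_one.mpr (Nat.zero_lt_of_lt h)
    rw [gbinom_succ_succ, ih (by lia), ih (by lia), mul_zero, add_zero]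

@[simp]
lemma gbinom_self (n : ℕ) : gbinom n n = 1 := by
  induction n with
  | zero => exact gbinom_zero_right 0
  | succ n ih => rw [gbinom_succ_succ, ih, gbinom_eq_zero_of_lt n.lt_succ_self, mul_zero, zero_add]

section Absorption

variable {S : Type*} [CommRing S]

lemma qInt_succ (q : S) (n : ℕ) : qInt q (n + 1) = q * qInt q n + 1 :=
  geom_sum_succ

lemma map_qInt {T F : Type*} [CommRing T] [FunLike F S T] [RingHomClass F S T] (f : F) (q : S)
    (n : ℕ) : f (qInt q n) = qInt (f q) n := by
  simp only [qInt, map_sum, map_pow]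

lemma qInt_succ_mul_gbinom_succ_succ (n k : ℕ) :
    qInt (X : ℤ[X]) (k + 1) * gbinom (n + 1) (k + 1) = qInt X (n + 1) * gbinom n k := by
  induction n generalizing k with
  | zero =>
    cases k with
    | zero => simp
    | succ k => simp [gbinom_eq_zero_of_lt]
  | succ n ih =>
    rw [gbinom_succ_succ (n + 1), qInt_succ X (n + 1), mul_add, mul_left_comm, ih k]
    cases k with
    | zero => simp [qInt]
    | succ k =>
      rw [qInt_succ X (k + 1)]
      linear_combination X * ih k - X * qInt X (n + 1) * gbinom_succ_succ n k

end Absorption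

section RootOfUnity

variable {S : Type*} [CommRing S] {q : S} {n : ℕ}

lemma qInt_ne_zero_of_pow_ne_one (h : q ^ n ≠ 1) : qInt q n ≠ 0 := fun h0 ↦
  h <| by rw [← sub_eq_zero, ← geom_sum_mul, ← qInt, h0, zero_mul]

lemma aeval_gbinom_eq_zero_of_isPrimitiveRoot [IsDomain S] (hq : IsPrimitiveRoot q n) {k : ℕ}
    (hk : 0 < k) (hkn : k < n) : aeval q (gbinom n k) = 0 := by
  have hk_ne : qInt q k ≠ 0 := qInt_ne_zero_of_pow_ne_one (hq.pow_ne_one_of_pos_of_lt hk.ne' hkn)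
  have hn_zero : qInt q n = 0 := hq.geom_sum_eq_zero (by lia)
  obtain ⟨k, rfl⟩ := Nat.exists_eq_add_one.mpr hk
  obtain ⟨n, rfl⟩ := Nat.exists_eq_add_one.mpr (Nat.zero_lt_of_lt hkn)
  have absorption := congrArg (aeval q) (qInt_succ_mul_gbinom_succ_succ n k)
  simp only [map_mul, map_qInt, aeval_X, hn_zero, zero_mul] at absorption
  exact (mul_eq_zero.mp absorption).resolve_left hk_ne

lemma aeval_gbinom_add_of_lt (hrow : ∀ j, 0 < j → j < n → aeval q (gbinom n j) = 0) (m : ℕ) {k : ℕ}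
    (hk : k < n) : aeval q (gbinom (m + n) k) = aeval q (gbinom m k) := by
  induction m generalizing k with
  | zero =>
    cases k with
    | zero => simp
    | succ k => simp [hrow _ k.succ_pos hk]
  | succ m ih =>
    rw [Nat.add_right_comm]
    cases k with
    | zero => simp
    | succ k => simp [gbinom_succ_succ, ih hk, ih (Nat.lt_of_succ_lt hk)]

lemma aeval_gbinom_add_add (hn : 0 < n) (hq : q ^ n = 1)
    (hrow : ∀ j, 0 < j → j < n → aeval q (gbinom n j) = 0) (m k : ℕ) :
    aeval q (gbinom (m + n) (k + n)) = aeval q (gbinom m (k + n)) + aeval q (gbinom m k) := by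
  induction m generalizing k with
  | zero =>
    cases k with
    | zero => simp [gbinom_eq_zero_of_lt hn]
    | succ k => simp [gbinom_eq_zero_of_lt]
  | succ m ih =>
    rw [Nat.add_right_comm]
    cases k with
    | zero =>
      obtain ⟨d, rfl⟩ := Nat.exists_eq_add_one.mpr hn
      have ih_zero := ih 0
      simp only [zero_add, gbinom_zero_right, map_one] at ih_zero ⊢
      simp only [gbinom_succ_succ, map_add, map_mul, map_pow, aeval_X, hq, one_mul, ih_zero,
        aeval_gbinom_add_of_lt hrow m d.lt_succ_self]
      ring
    | succ k =>
      have ih_succ := ih (k + 1)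
      rw [Nat.add_right_comm k 1 n] at ih_succ ⊢
      have hpow : q ^ (k + n + 1) = q ^ (k + 1) := by rw [add_right_comm, pow_add, hq, mul_one]
      simp only [gbinom_succ_succ, map_add, map_mul, map_pow, aeval_X, hpow, ih_succ, ih k]
      ring

theorem aeval_gbinom_mul_add_mul_add [IsDomain S] (hq : IsPrimitiveRoot q n) (a b : ℕ) {r s : ℕ}
    (hr : r < n) (hs : s < n) :
    aeval q (gbinom (n * a + r) (n * b + s)) = a.choose b * aeval q (gbinom r s) := by
  have hrow (j : ℕ) (hj : 0 < j) (hjn : j < n) : aeval q (gbinom n j) = 0 :=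
    aeval_gbinom_eq_zero_of_isPrimitiveRoot hq hj hjn
  induction a generalizing b with
  | zero =>
    cases b with
    | zero => simp
    | succ b => simp [gbinom_eq_zero_of_lt (show r < n * (b + 1) + s by lia)]
  | succ a ih =>
    rw [mul_add_one, Nat.add_right_comm]
    cases b with
    | zero => simpa [aeval_gbinom_add_of_lt hrow _ hs] using ih 0
    | succ b =>
      have ih_succ := ih (b + 1)
      rw [mul_add_one, Nat.add_right_comm (n * b)] at ih_succ ⊢
      rw [aeval_gbinom_add_add (Nat.zero_lt_of_lt hr) hq.pow_eq_one hrow, ih_succ, ih b,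
        Nat.choose_succ_succ, Nat.cast_add]
      ring

end RootOfUnity

lemma cyclotomic_int_dvd_iff_aeval_eq_zero {K : Type*} [Field K] [CharZero K] {ζ : K} {n : ℕ}
    (hζ : IsPrimitiveRoot ζ n) (hn : 0 < n) (f : ℤ[X]) :
    cyclotomic n ℤ ∣ f ↔ aeval ζ f = 0 := by
  rw [cyclotomic_eq_minpoly hζ hn, minpoly.isIntegrallyClosed_dvd_iff (hζ.isIntegral hn)]

theorem q_lucas_congruences_general {n r s : ℕ} (a b : ℕ) (hr : r < n) (hs : s < n) :
    cyclotomic n ℤ ∣ gbinom (n * a + r) (n * b + s) - (a.choose b : ℤ[X]) * gbinom r s := by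
  have hn : 0 < n := Nat.zero_lt_of_lt hr
  have hζ := Complex.isPrimitiveRoot_exp n hn.ne'
  rw [cyclotomic_int_dvd_iff_aeval_eq_zero hζ hn, map_sub, map_mul, map_natCast,
    aeval_gbinom_mul_add_mul_add hζ a b hr hs, sub_self]

lemma cyclotomic_dvd_gbinom_mul_of_not_dvd {n i : ℕ} (a : ℕ) (hn : 0 < n) (hi : ¬ n ∣ i) :
    cyclotomic n ℤ ∣ gbinom (n * a) i := by
  have hmod : 0 < i % n := Nat.pos_of_ne_zero fun h ↦ hi (Nat.dvd_of_mod_eq_zero h)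
  simpa [Nat.div_add_mod, gbinom_eq_zero_of_lt hmod] using
    q_lucas_congruences_general a (i / n) hn (i.mod_lt hn)

lemma cyclotomic_dvd_gbinom_mul_mul_sub_choose {n : ℕ} (a b : ℕ) (hn : 0 < n) :
    cyclotomic n ℤ ∣ gbinom (n * a) (n * b) - (a.choose b : ℤ[X]) := by
  simpa using q_lucas_congruences_general a b hn hn

lemma qInt_X_eq_cyclotomic {R : Type*} [CommRing R] {p : ℕ} (hp : p.Prime) :
    qInt (X : R[X]) p = cyclotomic p R :=
  haveI := Fact.mk hp
  (cyclotomic_prime R p).symm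

/-- q-Lucas congruences modulo `(p)_u`: for `p` prime, in `ℤ[u]`:
(a) for all `a ≥ 1` and `0 ≤ i ≤ pa` with `p ∤ i`, the `q`-integer `(p)_u` divides
`C(pa, i)_u`;
(b) for all `0 ≤ b ≤ a`, `C(pa, pb)_u ≡ binom(a,b) (mod (p)_u·ℤ[u])`. -/
theorem q_lucas_congruences (p : ℕ) (hp : p.Prime) :
    (∀ a : ℕ, 1 ≤ a → ∀ i ≤ p * a, ¬ p ∣ i →
      qInt (Polynomial.X : Polynomial ℤ) p ∣ gbinom (p * a) i) ∧
    (∀ a b : ℕ, b ≤ a →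
      qInt (Polynomial.X : Polynomial ℤ) p ∣
        (gbinom (p * a) (p * b) - (a.choose b : Polynomial ℤ))) := by
  rw [qInt_X_eq_cyclotomic hp]
  exact ⟨fun a _ _ _ hi ↦ cyclotomic_dvd_gbinom_mul_of_not_dvd a hp.pos hi,
    fun a b _ ↦ cyclotomic_dvd_gbinom_mul_mul_sub_choose a b hp.pos⟩
end

section
/- Let p be a prime, R a nontrivial commutative ring and q ∈ R with (p)_q = 0 and R q-divisible. Let A = R[x], σ(x) = qx, ∂_σ(x^n) = (n)_q x^{n−1}, and let D = D_{A,σ} be the Ore extension. Then: (a) the multiplication of D extends to the set D̂ of formal series Σ_{k≥0} a_k∂^k with a_k ∈ R[x] (each coefficient of a product being a finite sum, because ∂_σ^l(a) = 0 for l > deg a), making D̂ an R-algebra containing D; (b) the set ẐD of formal series Σ_{k≥0} b_k∂^{pk} with all b_k ∈ R[x^p] is the center of D̂, and the set ẐA of formal series Σ_{k≥0} a_k∂^{pk} with a_k ∈ R[x] is a commutative subring of D̂ which is a ẐD-module free of rank p (with basis 1, x, …, x^{p−1}); (c) there exists an isomorphism of R-algebras from D̂ onto the endomorphism ring End_{ẐD}(ẐA)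 of the ẐD-module ẐA, under which each central element of ẐD corresponds to multiplication by itself. (Azumaya splitting of the completed ring of q-twisted differential operators over its center.) -/
/-- The completed ring `D̂` is modelled by formal series `Σ_k a_k∂^k`, i.e. by the type
`ℕ → R[x]`; `oneD` is its unit `∂^0`. -/
noncomputable def oneD (R : Type*) [CommRing R] : ℕ → Polynomial R :=
  fun k => if k = 0 then 1 else 0

/-- The element `x^r = x^r·∂^0` of `D̂`. -/
noncomputable def xpowD (R : Type*) [CommRing R] (r : ℕ) : ℕ → Polynomial R :=
  fun k => if k = 0 then Polynomial.X ^ r else 0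

/-- `ẐD`: formal series `Σ_k b_k∂^{pk}` with all `b_k ∈ R[x^p]` (the center of `D̂`). -/
def ZDhat (R : Type*) [CommRing R] (p : ℕ) : Set (ℕ → Polynomial R) :=
  {f | (∀ k : ℕ, ¬ p ∣ k → f k = 0) ∧
    ∀ k : ℕ, f k ∈ Algebra.adjoin R {(Polynomial.X : Polynomial R) ^ p}}

/-- `ẐA`: formal series `Σ_k a_k∂^{pk}` with `a_k ∈ R[x]` (the completed centralizer of
`A`). -/
def ZAhat (R : Type*) [CommRing R] (p : ℕ) : Set (ℕ → Polynomial R) :=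
  {f | ∀ k : ℕ, ¬ p ∣ k → f k = 0}

open scoped Polynomial PowerSeries

/-! ### `q`-integers -/

section QInt

variable {R : Type*} [CommRing R] {q : R} {m n : ℕ}

theorem qInt_zero (q : R) : qInt q 0 = 0 := geom_sum_zero q

theorem qInt_one (q : R) : qInt q 1 = 1 := geom_sum_one q

theorem qInt_add (q : R) (m n : ℕ) : qInt q (m + n) = qInt q m + q ^ m * qInt q n := by
  simp only [qInt, Finset.sum_range_add, Finset.mul_sum, pow_add]

theorem pow_eq_one_of_qInt_eq_zero (h : qInt q n = 0) : q ^ n = 1 := by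
  have := geom_sum_mul q n
  rwa [← qInt, h, zero_mul, eq_comm, sub_eq_zero] at this

theorem qInt_mul_eq_zero (h : qInt q n = 0) (k : ℕ) : qInt q (k * n) = 0 := by
  induction k with
  | zero => rw [zero_mul, qInt_zero]
  | succ k ih => rw [Nat.succ_mul, qInt_add, ih, h, mul_zero, add_zero]

theorem qInt_gcd_eq_zero (hm : qInt q m = 0) (hn : qInt q n = 0) : qInt q (m.gcd n) = 0 := by
  induction m, n using Nat.gcd.induction with
  | H0 n => rwa [Nat.gcd_zero_left]
  | H1 m n _ ih =>
    rw [Nat.gcd_rec]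
    refine ih ?_ hm
    have hdiv : qInt q (n / m * m) = 0 := qInt_mul_eq_zero hm _
    rwa [← Nat.div_add_mod' n m, qInt_add, hdiv, pow_eq_one_of_qInt_eq_zero hdiv, zero_add,
      one_mul] at hn

theorem qInt_ne_zero_of_coprime [Nontrivial R] (hmn : m.Coprime n) (hn : qInt q n = 0) :
    qInt q m ≠ 0 := fun hm => by
  have := qInt_gcd_eq_zero hm hn
  rw [hmn.gcd_eq_one, qInt_one] at this
  exact one_ne_zero this

/-- The relation `dx = q xd + 1` is that of the `q`-Weyl algebra. -/
theorem pow_succ_mul_of_qWeyl {E : Type*} [Ring E] [Algebra R E] {d x : E}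
    (h : d * x = q • (x * d) + 1) (n : ℕ) :
    d ^ (n + 1) * x = q ^ (n + 1) • (x * d ^ (n + 1)) + qInt q (n + 1) • d ^ n := by
  induction n with
  | zero => simp [h, qInt_one]
  | succ n ih =>
    calc d ^ (n + 1 + 1) * x
        = q ^ (n + 1) • (d * x * d ^ (n + 1)) + qInt q (n + 1) • d ^ (n + 1) := by
          rw [pow_succ', mul_assoc, ih, mul_add, mul_smul_comm, mul_smul_comm, ← pow_succ',
            mul_assoc]
      _ = q ^ (n + 1 + 1) • (x * d ^ (n + 1 + 1)) + qInt q (n + 1 + 1) • d ^ (n + 1) := by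
          rw [h, qInt_add q (n + 1) 1, qInt_one, mul_one, add_mul, one_mul, smul_mul_assoc,
            mul_assoc, ← pow_succ', smul_add, smul_smul, ← pow_succ, add_smul]
          abel

theorem commute_pow_of_qWeyl {E : Type*} [Ring E] [Algebra R E] {d x : E}
    (h : d * x = q • (x * d) + 1) (hn : qInt q n = 0) : Commute (d ^ n) x := by
  cases n with
  | zero => rw [pow_zero]; exact Commute.one_left x
  | succ n =>
    rw [Commute, SemiconjBy, pow_succ_mul_of_qWeyl h, pow_eq_one_of_qInt_eq_zero hn, hn, one_smul,
      zero_smul, add_zero]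

end QInt

/-! ### Twisted derivations -/

section TwistedDerivation

/-- `δ` is a `σ`-derivation of `A`; its additivity is left to the type of `δ` in applications. -/
def IsTwistedDerivation {A : Type*} [CommRing A] (σ δ : A → A) : Prop :=
  ∀ a b, δ (a * b) = δ a * b + σ a * δ b

variable {R A : Type*} [CommRing R] [CommRing A] [Algebra R A] {σ : A →ₐ[R] A} {δ : A →ₗ[R] A}

/-- The extension of a linear map to formal power series, coefficient by coefficient. -/
noncomputable def coeffwise (δ : A →ₗ[R] A) : A⟦X⟧ →ₗ[R] A⟦X⟧ where
  toFun f := PowerSeries.mk fun k => δ (PowerSeries.coeff k f)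
  map_add' f g := by ext; simp
  map_smul' r f := by ext; simp

@[simp]
theorem coeff_coeffwise (δ : A →ₗ[R] A) (k : ℕ) (f : A⟦X⟧) :
    PowerSeries.coeff k (coeffwise δ f) = δ (PowerSeries.coeff k f) :=
  PowerSeries.coeff_mk k fun k => δ (PowerSeries.coeff k f)

theorem coeffwise_C (δ : A →ₗ[R] A) (a : A) :
    coeffwise δ (PowerSeries.C a) = PowerSeries.C (δ a) := by
  ext k
  simp only [coeff_coeffwise, PowerSeries.coeff_C, apply_ite δ, map_zero]

namespace IsTwistedDerivation

theorem coeffwise (h : IsTwistedDerivation σ δ) :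
    IsTwistedDerivation (PowerSeries.mapAlgHom σ) (coeffwise δ) := by
  intro f g
  ext k
  simp only [coeff_coeffwise, PowerSeries.coeff_mul, map_sum, h _ _, Finset.sum_add_distrib,
    map_add, PowerSeries.mapAlgHom_apply, PowerSeries.coeff_map, RingHom.coe_coe]

/-- The deformation `δ + g σ` of a `σ`-derivation `δ`, as an operator linear over a ring `S` of
constants. It obeys the same commutation rule with multiplications as `δ`, but need not kill `1`. -/
def deform (h : IsTwistedDerivation σ δ) {S : Subalgebra R A}
    (hS : ∀ z ∈ S, σ z = z ∧ δ z = 0) (g : A) : Module.End S A where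
  toFun m := δ m + g * σ m
  map_add' a b := by simp only [map_add]; ring
  map_smul' := by
    rintro ⟨z, hz⟩ m
    simp only [Subalgebra.smul_def, smul_eq_mul, RingHom.id_apply, h z m, map_mul, hS z hz]
    ring

variable (h : IsTwistedDerivation σ δ) {S : Subalgebra R A}
  (hS : ∀ z ∈ S, σ z = z ∧ δ z = 0) (g : A)

theorem deform_apply (m : A) : h.deform hS g m = δ m + g * σ m := rfl

theorem deform_mul (a m : A) : h.deform hS g (a * m) = σ a * h.deform hS g m + δ a * m := by
  rw [deform_apply, deform_apply, h, map_mul]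
  ring

end IsTwistedDerivation

end TwistedDerivation

/-! ### The `q`-derivation of `R[x]` -/

section QDerivation

variable {R : Type*} [CommRing R] {q : R} {σ : R[X] →ₐ[R] R[X]} {D : R[X] →ₗ[R] R[X]} {p : ℕ}

/-- `σ` is the substitution `x ↦ qx` of `R[x]`, and `D` is the `q`-derivation `∂_σ`. -/
structure IsQDerivation (q : R) (σ : R[X] →ₐ[R] R[X]) (D : R[X] →ₗ[R] R[X]) : Prop where
  map_X : σ Polynomial.X = Polynomial.C q * Polynomial.X
  apply_X_pow (n : ℕ) : D (Polynomial.X ^ n) = qInt q n • Polynomial.X ^ (n - 1)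

namespace IsQDerivation

theorem map_X_pow (h : IsQDerivation q σ D) (n : ℕ) :
    σ (Polynomial.X ^ n) = q ^ n • Polynomial.X ^ n := by
  rw [map_pow, h.map_X, mul_pow, ← Polynomial.C_pow, Polynomial.smul_eq_C_mul]

theorem apply_X_pow_succ (h : IsQDerivation q σ D) (n : ℕ) :
    D (Polynomial.X ^ (n + 1)) = qInt q (n + 1) • Polynomial.X ^ n :=
  h.apply_X_pow (n + 1)

theorem apply_X (h : IsQDerivation q σ D) : D Polynomial.X = 1 := by
  simpa [qInt_one] using h.apply_X_pow_succ 0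

theorem apply_one (h : IsQDerivation q σ D) : D 1 = 0 := by
  simpa [qInt_zero] using h.apply_X_pow 0

theorem apply_C (h : IsQDerivation q σ D) (r : R) : D (Polynomial.C r) = 0 := by
  rw [← mul_one (Polynomial.C r), ← Polynomial.smul_eq_C_mul, map_smul, h.apply_one, smul_zero]

theorem isTwistedDerivation (h : IsQDerivation q σ D) : IsTwistedDerivation σ D := by
  have X_pow_mul_X_pow (m n : ℕ) : D (Polynomial.X ^ (m + n)) =
      D (Polynomial.X ^ m) * Polynomial.X ^ n + σ (Polynomial.X ^ m) * D (Polynomial.X ^ n) := by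
    rcases m with _ | m
    · simp [h.apply_one]
    rcases n with _ | n
    · simp [h.apply_one]
    rw [← add_assoc, h.apply_X_pow_succ, h.apply_X_pow_succ, h.apply_X_pow_succ, h.map_X_pow,
      add_assoc, qInt_add]
    simp only [Polynomial.smul_eq_C_mul, map_add, map_mul]
    ring
  intro a b
  induction a using Polynomial.induction_on' with
  | add a a' h h' => simp only [add_mul, map_add, h, h']; ring
  | monomial m r =>
    induction b using Polynomial.induction_on' with
    | add b b' h h' => simp only [mul_add, map_add, h, h']; ring
    | monomial n s =>
      simp only [← Polynomial.smul_X_eq_monomial, map_smul, smul_mul_smul_comm, ← pow_add,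
        X_pow_mul_X_pow, smul_add]

theorem map_expand (h : IsQDerivation q σ D) (hp : qInt q p = 0) (b : R[X]) :
    σ (Polynomial.expand R p b) = Polynomial.expand R p b := by
  suffices σ.comp (Polynomial.expand R p) = Polynomial.expand R p from DFunLike.congr_fun this b
  ext1
  simp [h.map_X_pow, pow_eq_one_of_qInt_eq_zero hp, -map_pow]

theorem apply_expand (h : IsQDerivation q σ D) (hp : qInt q p = 0) (b : R[X]) :
    D (Polynomial.expand R p b) = 0 := by
  induction b using Polynomial.induction_on' with
  | add b b' h h' => rw [map_add, map_add, h, h', add_zero]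
  | monomial n r =>
    rw [Polynomial.expand_monomial, ← Polynomial.smul_X_eq_monomial, map_smul, h.apply_X_pow,
      qInt_mul_eq_zero hp, zero_smul, smul_zero]

theorem pow_apply_X_pow_self (h : IsQDerivation q σ D) (n : ℕ) :
    (D ^ n) (Polynomial.X ^ n) = Polynomial.C (∏ m ∈ Finset.range n, qInt q (m + 1)) := by
  induction n with
  | zero => simp
  | succ n ih =>
    rw [pow_succ, Module.End.mul_apply, h.apply_X_pow_succ, map_smul, ih, Finset.prod_range_succ,
      Polynomial.smul_C, smul_eq_mul, mul_comm]

theorem pow_apply_X_pow_of_lt (h : IsQDerivation q σ D) {m n : ℕ} (hmn : m < n) :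
    (D ^ n) (Polynomial.X ^ m) = 0 := by
  obtain ⟨k, rfl⟩ := Nat.exists_eq_add_of_lt hmn
  rw [show m + k + 1 = k + (1 + m) by ring, pow_add, pow_add, pow_one, Module.End.mul_apply,
    Module.End.mul_apply, h.pow_apply_X_pow_self, h.apply_C, map_zero]

end IsQDerivation

end QDerivation

/-! ### `ẐA` as a free module over `ẐD` -/

section Expand

variable {R : Type*} [CommRing R] {p : ℕ}

/-- `ẐD` as the ring `R[x^p]⟦t⟧`, where `t = ∂^p`; accordingly `ẐA` is `R[x]⟦t⟧`. -/
noncomputable def expandedSeries (R : Type*) [CommRing R] (p : ℕ) : Subalgebra R R[X]⟦X⟧ :=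
  (PowerSeries.mapAlgHom (Polynomial.expand R p)).range

theorem mem_expandedSeries {f : R[X]⟦X⟧} : f ∈ expandedSeries R p ↔
    ∀ k, PowerSeries.coeff k f ∈ Algebra.adjoin R {(Polynomial.X : R[X]) ^ p} := by
  rw [Algebra.adjoin_singleton_eq_range_aeval]
  constructor
  · rintro ⟨b, rfl⟩ k
    exact ⟨PowerSeries.coeff k b, (PowerSeries.coeff_map _ _ _).symm⟩
  · intro hf
    choose b hb using hf
    refine ⟨PowerSeries.mk b, ?_⟩
    ext1 k
    exact (PowerSeries.coeff_map _ _ _).trans ((congrArg _ (PowerSeries.coeff_mk _ _)).trans (hb k))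

theorem coeff_sum_expand_mul_X_pow (c : Fin p → R[X]) (k : ℕ) (r : Fin p) :
    (∑ i, Polynomial.expand R p (c i) * Polynomial.X ^ (i : ℕ)).coeff (k * p + r) =
      (c r).coeff k := by
  have hp : 0 < p := r.pos
  rw [Polynomial.finsetSum_coeff, Finset.sum_eq_single_of_mem r (Finset.mem_univ r)]
  · rw [Polynomial.coeff_mul_X_pow, Polynomial.coeff_expand_mul hp]
  · intro i _ hi
    rw [Polynomial.coeff_mul_X_pow']
    split_ifs with hle
    · rw [Polynomial.coeff_expand hp, if_neg]
      rw [← Nat.modEq_iff_dvd' hle]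
      intro hmod
      refine hi (Fin.ext (Nat.ModEq.eq_of_lt_of_lt (hmod.trans ?_) i.2 r.2))
      simp [Nat.ModEq]
    · rfl

theorem exists_eq_sum_expand_mul_X_pow [NeZero p] (a : R[X]) : ∃ c : Fin p → R[X],
    a = ∑ i, Polynomial.expand R p (c i) * Polynomial.X ^ (i : ℕ) := by
  induction a using Polynomial.induction_on' with
  | add a a' h h' =>
    obtain ⟨c, rfl⟩ := h
    obtain ⟨c', rfl⟩ := h'
    exact ⟨c + c', by simp only [Pi.add_apply, map_add, add_mul, Finset.sum_add_distrib]⟩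
  | monomial n r =>
    refine ⟨Pi.single (Fin.ofNat p n) (Polynomial.monomial (n / p) r), ?_⟩
    rw [Finset.sum_eq_single_of_mem (Fin.ofNat p n) (Finset.mem_univ _)]
    · rw [Pi.single_eq_same, Polynomial.expand_monomial, Polynomial.monomial_mul_X_pow,
        Fin.val_ofNat, Nat.div_add_mod']
    · intro i _ hi
      rw [Pi.single_eq_of_ne hi, map_zero, zero_mul]

theorem linearIndependent_C_X_pow : LinearIndependent (expandedSeries R p)
    fun i : Fin p => (PowerSeries.C (Polynomial.X ^ (i : ℕ)) : R[X]⟦X⟧) := by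
  rw [Fintype.linearIndependent_iff]
  intro g hg r
  choose c hc using fun i => (g i).2
  have hsum (k : ℕ) : ∑ i, Polynomial.expand R p (PowerSeries.coeff k (c i)) *
      Polynomial.X ^ (i : ℕ) = 0 := by
    simpa [Subalgebra.smul_def, ← hc, PowerSeries.mapAlgHom_apply, PowerSeries.coeff_mul_C,
      -map_pow] using congrArg (PowerSeries.coeff k) hg
  have hcr : c r = 0 := by
    ext k n
    simpa [hsum] using (coeff_sum_expand_mul_X_pow (fun i => PowerSeries.coeff k (c i)) n r).symm
  ext1
  rw [← hc r, hcr]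
  exact map_zero _

theorem span_C_X_pow [NeZero p] : Submodule.span (expandedSeries R p)
    (Set.range fun i : Fin p => (PowerSeries.C (Polynomial.X ^ (i : ℕ)) : R[X]⟦X⟧)) = ⊤ := by
  refine eq_top_iff.2 fun f _ => ?_
  choose c hc using fun k => exists_eq_sum_expand_mul_X_pow (p := p) (PowerSeries.coeff k f)
  have hf : f = ∑ i, (⟨_, PowerSeries.mk fun k => c k i, rfl⟩ : expandedSeries R p) •
      PowerSeries.C (Polynomial.X ^ (i : ℕ)) := by
    ext1 k
    simpa [Subalgebra.smul_def, PowerSeries.mapAlgHom_apply, PowerSeries.coeff_mul_C,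
      -map_pow] using hc k
  rw [hf]
  exact sum_mem fun i _ => Submodule.smul_mem _ _ (Submodule.subset_span ⟨i, rfl⟩)

/-- The basis `1, x, …, x^{p-1}` of `ẐA` over `ẐD`. -/
noncomputable def xPowBasis (R : Type*) [CommRing R] (p : ℕ) [NeZero p] :
    Module.Basis (Fin p) (expandedSeries R p) R[X]⟦X⟧ :=
  .mk linearIndependent_C_X_pow span_C_X_pow.ge

theorem xPowBasis_apply [NeZero p] (i : Fin p) :
    xPowBasis R p i = PowerSeries.C (Polynomial.X ^ (i : ℕ)) :=
  Module.Basis.mk_apply _ _ i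

end Expand

/-! ### The deformed operator -/

section Deformation

/-- The solution is the compositional inverse of `y ↦ y ∏ (u_i + v_i y)`. -/
theorem exists_mul_prod_eq_X {S ι : Type*} [CommRing S] (s : Finset ι) (u v : ι → S)
    (hu : ∀ i ∈ s, IsUnit (u i)) : ∃ h : S⟦X⟧, PowerSeries.constantCoeff h = 0 ∧
      h * ∏ i ∈ s, (PowerSeries.C (u i) + PowerSeries.C (v i) * h) = PowerSeries.X := by
  let P : S[X] := Polynomial.X * ∏ i ∈ s, (Polynomial.C (u i) + Polynomial.C (v i) * Polynomial.X)
  have hP₀ : PowerSeries.constantCoeff (P : S⟦X⟧) = 0 := by simp [P]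
  have hP₁ : IsUnit (PowerSeries.coeff 1 (P : S⟦X⟧)) := by
    have : P.coeff 1 = ∏ i ∈ s, u i := by
      simp [P, Polynomial.coeff_X_mul, Polynomial.coeff_zero_eq_eval_zero, Polynomial.eval_prod]
    rw [Polynomial.coeff_coe, this]
    exact IsUnit.prod_iff.2 hu
  refine ⟨PowerSeries.substInvOfIsUnit P hP₁, PowerSeries.constantCoeff_substInvOfIsUnit _ _, ?_⟩
  have := PowerSeries.subst_substInvOfIsUnit_right (P : S⟦X⟧) hP₀ hP₁
  rw [PowerSeries.subst_coe (PowerSeries.HasSubst.substInvOfIsUnit _ _)] at this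
  simpa [P, map_prod, PowerSeries.C_eq_algebraMap] using this

variable {R : Type*} [CommRing R] {q : R} {σ : R[X] →ₐ[R] R[X]} {D : R[X] →ₗ[R] R[X]} {p : ℕ}

/-- The substitution `x ↦ x^p` in the coefficients, as a map from `R[x]⟦t⟧` onto `ẐD`. -/
noncomputable def expandSeries (R : Type*) [CommRing R] (p : ℕ) :
    R[X]⟦X⟧ →ₐ[R] expandedSeries R p :=
  (PowerSeries.mapAlgHom (Polynomial.expand R p)).rangeRestrict

theorem coe_expandSeries (f : R[X]⟦X⟧) : (expandSeries R p f : R[X]⟦X⟧) =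
    PowerSeries.map (Polynomial.expand R p : R[X] →+* R[X]) f := rfl

theorem constantCoeff_expandSeries {h : R[X]⟦X⟧} (h₀ : PowerSeries.constantCoeff h = 0) :
    PowerSeries.constantCoeff (expandSeries R p h : R[X]⟦X⟧) = 0 := by
  rw [coe_expandSeries, ← PowerSeries.coeff_zero_eq_constantCoeff_apply, PowerSeries.coeff_map,
    PowerSeries.coeff_zero_eq_constantCoeff_apply, h₀, map_zero]

/-- The coefficient of `∂'(x^{m+1}) = ((m+1)_q + q^{m+1} x^p H) x^m`, where `H` is obtained from `h`
by `x ↦ x^p`. -/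
noncomputable def deformFactor (q : R) (h : R[X]⟦X⟧) (m : ℕ) : R[X]⟦X⟧ :=
  PowerSeries.C (Polynomial.C (qInt q (m + 1))) +
    PowerSeries.C (Polynomial.C (q ^ (m + 1)) * Polynomial.X) * h

namespace IsQDerivation

/-- The operator `∂' = ∂_σ + x^{p-1} H σ` on `ẐA`, where `H ∈ ẐD` is obtained from `h` by
`x ↦ x^p`. For a suitable `h` it satisfies `∂'^p = t`. -/
noncomputable def deform (hD : IsQDerivation q σ D) (hpq : qInt q p = 0) (h : R[X]⟦X⟧) :
    Module.End (expandedSeries R p) R[X]⟦X⟧ :=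
  hD.isTwistedDerivation.coeffwise.deform (S := expandedSeries R p)
    (by
      rintro _ ⟨b, rfl⟩
      constructor <;> ext1 k
      · exact hD.map_expand hpq _
      · simpa [PowerSeries.mapAlgHom_apply] using hD.apply_expand hpq _)
    (PowerSeries.C (Polynomial.X ^ (p - 1)) * (expandSeries R p h : R[X]⟦X⟧))

variable (hD : IsQDerivation q σ D) (hpq : qInt q p = 0) {h : R[X]⟦X⟧}

theorem deform_C_mul (a : R[X]) (m : R[X]⟦X⟧) : hD.deform hpq h (PowerSeries.C a * m) =
    PowerSeries.C (σ a) * hD.deform hpq h m + PowerSeries.C (D a) * m := by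
  rw [deform, IsTwistedDerivation.deform_mul, coeffwise_C, PowerSeries.mapAlgHom_apply,
    PowerSeries.map_C, RingHom.coe_coe]

theorem deform_C (a : R[X]) : hD.deform hpq h (PowerSeries.C a) = PowerSeries.C (D a) +
    PowerSeries.C (Polynomial.X ^ (p - 1) * σ a) * (expandSeries R p h : R[X]⟦X⟧) := by
  rw [deform, IsTwistedDerivation.deform_apply, coeffwise_C, PowerSeries.mapAlgHom_apply,
    PowerSeries.map_C, RingHom.coe_coe, map_mul]
  ring

theorem deform_C_X_pow_succ [NeZero p] (m : ℕ) :
    hD.deform hpq h (PowerSeries.C (Polynomial.X ^ (m + 1))) =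
      expandSeries R p (deformFactor q h m) • PowerSeries.C (Polynomial.X ^ m) := by
  have hX : (Polynomial.X ^ (p - 1) * Polynomial.X ^ (m + 1) : R[X]) =
      Polynomial.X ^ p * Polynomial.X ^ m := by
    rw [← pow_add, ← pow_add]
    congr 1
    have := NeZero.pos p
    omega
  rw [deform_C, hD.apply_X_pow_succ, hD.map_X_pow, mul_smul_comm, hX, Subalgebra.smul_def,
    coe_expandSeries, coe_expandSeries, deformFactor]
  simp only [map_add, map_mul, PowerSeries.map_C, RingHom.coe_coe, Polynomial.expand_C,
    Polynomial.expand_X, Polynomial.smul_eq_C_mul, smul_eq_mul]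
  ring

theorem deform_pow_C_X_pow_self [NeZero p] (n : ℕ) :
    (hD.deform hpq h ^ n) (PowerSeries.C (Polynomial.X ^ n)) =
      expandSeries R p (∏ m ∈ Finset.range n, deformFactor q h m) • 1 := by
  induction n with
  | zero => simp
  | succ n ih =>
    rw [pow_succ, Module.End.mul_apply, deform_C_X_pow_succ, map_smul, ih, smul_smul, ← map_mul,
      Finset.prod_range_succ_comm]

theorem deform_pow_one [NeZero p] : (hD.deform hpq h ^ p) 1 =
    expandSeries R p (h * ∏ m ∈ Finset.range (p - 1), deformFactor q h m) • 1 := by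
  have hone : hD.deform hpq h 1 =
      expandSeries R p h • PowerSeries.C (Polynomial.X ^ (p - 1)) := by
    rw [← map_one PowerSeries.C, deform_C, hD.apply_one, map_one, mul_one, map_zero, zero_add,
      mul_comm, Subalgebra.smul_def, smul_eq_mul]
  rw [← pow_sub_one_mul (NeZero.ne p), Module.End.mul_apply, hone, map_smul,
    deform_pow_C_X_pow_self, smul_smul, ← map_mul]

theorem deform_mul_lmul_C (a : R[X]) :
    hD.deform hpq h * Algebra.lmul (expandedSeries R p) R[X]⟦X⟧ (PowerSeries.C a) =
      Algebra.lmul (expandedSeries R p) R[X]⟦X⟧ (PowerSeries.C (σ a)) * hD.deform hpq h +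
        Algebra.lmul (expandedSeries R p) R[X]⟦X⟧ (PowerSeries.C (D a)) := by
  refine LinearMap.ext fun m => ?_
  simp only [Module.End.mul_apply, LinearMap.add_apply, Algebra.coe_lmul_eq_mul,
    LinearMap.mul_apply', deform_C_mul]

theorem commute_deform_pow_lmul_C_X : Commute (hD.deform hpq h ^ p)
    (Algebra.lmul (expandedSeries R p) R[X]⟦X⟧ (PowerSeries.C Polynomial.X)) := by
  refine commute_pow_of_qWeyl (q := q) ?_ hpq
  rw [deform_mul_lmul_C, hD.apply_X, hD.map_X, ← Polynomial.smul_eq_C_mul, map_one, map_one,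
    ← smul_mul_assoc]
  congr 2
  ext1 m
  ext1 k
  simp [Polynomial.smul_eq_C_mul, PowerSeries.coeff_C_mul, mul_assoc]

theorem constantCoeff_deform_pow (h₀ : PowerSeries.constantCoeff h = 0) (n : ℕ) (m : R[X]⟦X⟧) :
    PowerSeries.constantCoeff ((hD.deform hpq h ^ n) m) =
      (D ^ n) (PowerSeries.constantCoeff m) := by
  induction n generalizing m with
  | zero => simp
  | succ n ih =>
    rw [pow_succ, Module.End.mul_apply, ih, pow_succ, Module.End.mul_apply]
    congr 1
    rw [deform, IsTwistedDerivation.deform_apply, map_add, map_mul, map_mul,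
      constantCoeff_expandSeries h₀, mul_zero, zero_mul, add_zero]
    simpa only [PowerSeries.coeff_zero_eq_constantCoeff] using coeff_coeffwise D 0 m

theorem exists_deform_pow_eq_lmul_X [NeZero p]
    (hunit : ∀ m, 0 < m → m < p → IsUnit (qInt q m)) :
    ∃ h : R[X]⟦X⟧, PowerSeries.constantCoeff h = 0 ∧
      hD.deform hpq h ^ p = Algebra.lmul _ _ PowerSeries.X := by
  obtain ⟨h, h₀, hX⟩ := exists_mul_prod_eq_X (Finset.range (p - 1))
    (fun m => Polynomial.C (qInt q (m + 1)))
    (fun m => Polynomial.C (q ^ (m + 1)) * Polynomial.X) fun m hm =>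
      (hunit _ m.succ_pos (Nat.add_lt_of_lt_sub (Finset.mem_range.1 hm))).map Polynomial.C
  have hone : (hD.deform hpq h ^ p) 1 = PowerSeries.X := by
    rw [deform_pow_one]
    simp only [deformFactor]
    rw [hX, Subalgebra.smul_def, coe_expandSeries, PowerSeries.map_X, smul_eq_mul, mul_one]
  refine ⟨h, h₀, (xPowBasis R p).ext fun i => ?_⟩
  have hcomm := LinearMap.congr_fun ((hD.commute_deform_pow_lmul_C_X hpq (h := h)).pow_right i).eq 1
  rw [← map_pow, ← map_pow, Module.End.mul_apply, Module.End.mul_apply, hone] at hcomm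
  simpa [xPowBasis_apply, mul_comm PowerSeries.X, -map_pow] using hcomm

end IsQDerivation

end Deformation

/-! ### A basis of the endomorphism ring -/

section EndBasis

theorem exists_basis_linearMap_of_isUnit_det {S M N ι : Type*} [CommRing S] [AddCommGroup M]
    [Module S M] [CommRing N] [Algebra S N] [Fintype ι] [DecidableEq ι] (b : Module.Basis ι S M)
    (v : ι → M →ₗ[S] N) (hv : IsUnit (Matrix.of fun i j => v j (b i)).det) :
    ∃ b' : Module.Basis ι N (M →ₗ[S] N), ⇑b' = v := by
  let e : Module.Basis ι N (M →ₗ[S] N) := .ofEquivFun (b.constr N).symm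
  have he : e.det v = (Matrix.of fun i j => v j (b i)).det := by
    rw [Module.Basis.det_apply]
    rfl
  obtain ⟨hli, hspan⟩ := (Module.Basis.is_basis_iff_det e).2 (he ▸ hv)
  exact ⟨.mk hli hspan.ge, Module.Basis.coe_mk _ _⟩

variable {R : Type*} [CommRing R] {q : R} {σ : R[X] →ₐ[R] R[X]} {D : R[X] →ₗ[R] R[X]} {p : ℕ}

/-- Modulo `t`, the matrix `(∂'^j(x^i))` is triangular with the `q`-factorials on its diagonal. -/
theorem IsQDerivation.isUnit_det_deform_pow (hD : IsQDerivation q σ D) (hpq : qInt q p = 0)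
    (hunit : ∀ m, 0 < m → m < p → IsUnit (qInt q m)) {h : R[X]⟦X⟧}
    (h₀ : PowerSeries.constantCoeff h = 0) :
    IsUnit (Matrix.of fun i j : Fin p =>
      (hD.deform hpq h ^ (j : ℕ)) (PowerSeries.C (Polynomial.X ^ (i : ℕ)))).det := by
  have hentry (i j : Fin p) : PowerSeries.constantCoeff
      ((hD.deform hpq h ^ (j : ℕ)) (PowerSeries.C (Polynomial.X ^ (i : ℕ)))) =
        (D ^ (j : ℕ)) (Polynomial.X ^ (i : ℕ)) := by
    rw [hD.constantCoeff_deform_pow hpq h₀, PowerSeries.constantCoeff_C]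
  rw [PowerSeries.isUnit_iff_constantCoeff, RingHom.map_det, Matrix.det_of_isLowerTriangular]
  · refine IsUnit.prod_univ_iff.2 fun i => ?_
    simp only [RingHom.mapMatrix_apply, Matrix.map_apply, Matrix.of_apply, hentry,
      hD.pow_apply_X_pow_self]
    refine (IsUnit.prod_iff.2 fun m hm => hunit _ m.succ_pos ?_).map Polynomial.C
    exact (Nat.succ_le_of_lt (Finset.mem_range.1 hm)).trans_lt i.2
  · intro i j hij
    exact (hentry i j).trans (hD.pow_apply_X_pow_of_lt (Fin.lt_def.1 hij))

theorem IsQDerivation.exists_basis_deform_pow [NeZero p] (hD : IsQDerivation q σ D)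
    (hpq : qInt q p = 0) (hunit : ∀ m, 0 < m → m < p → IsUnit (qInt q m)) {h : R[X]⟦X⟧}
    (h₀ : PowerSeries.constantCoeff h = 0) :
    ∃ b : Module.Basis (Fin p) R[X]⟦X⟧ (Module.End (expandedSeries R p) R[X]⟦X⟧),
      ⇑b = fun i : Fin p => hD.deform hpq h ^ (i : ℕ) := by
  refine exists_basis_linearMap_of_isUnit_det (xPowBasis R p) _ ?_
  simpa only [xPowBasis_apply] using hD.isUnit_det_deform_pow hpq hunit h₀

end EndBasis

/-! ### Formal series in `∂` as power series in `t = ∂^p` -/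

section Components

/-- The components `f_i ∈ A⟦t⟧` of a formal series `∑_k a_k∂^k = ∑_{i<p} f_i∂^i`, where
`t = ∂^p`. -/
@[simps]
noncomputable def componentsEquiv (A : Type*) [Semiring A] (p : ℕ) [NeZero p] :
    (ℕ → A) ≃ₗ[A] (Fin p → A⟦X⟧) where
  toFun f i := PowerSeries.mk fun k => f (k * p + i)
  invFun g n := PowerSeries.coeff (n / p) (g (Fin.ofNat p n))
  map_add' f g := by ext; simp
  map_smul' a f := by ext; simp
  left_inv f := by
    ext n
    simp only [PowerSeries.coeff_mk, Fin.val_ofNat, Nat.div_add_mod']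
  right_inv g := by
    ext i k
    have hdiv : (k * p + i) / p = k := by
      rw [Nat.mul_comm, Nat.mul_add_div (NeZero.pos p), Nat.div_eq_of_lt i.2, add_zero]
    have hmod : Fin.ofNat p (k * p + i) = i := by
      ext1
      rw [Fin.val_ofNat, Nat.mul_add_mod', Nat.mod_eq_of_lt i.2]
    simp only [PowerSeries.coeff_mk, hdiv, hmod]

/-- The inclusion of `ẐA = A⟦t⟧` into formal series in `∂`, where `t = ∂^p`. -/
noncomputable def ofSeries (A : Type*) [Semiring A] (p : ℕ) [NeZero p] : A⟦X⟧ →ₗ[A] (ℕ → A) :=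
  (componentsEquiv A p).symm.toLinearMap ∘ₗ LinearMap.single A (fun _ => A⟦X⟧) 0

section Semiring

variable {A : Type*} [Semiring A] {p : ℕ} [NeZero p]

theorem componentsEquiv_ofSeries (m : A⟦X⟧) :
    componentsEquiv A p (ofSeries A p m) = Pi.single 0 m :=
  (componentsEquiv A p).apply_symm_apply _

theorem componentsEquiv_symm_single_zero (m : A⟦X⟧) :
    (componentsEquiv A p).symm (Pi.single 0 m) = ofSeries A p m := rfl

theorem ofSeries_injective : Function.Injective (ofSeries A p) :=
  (componentsEquiv A p).symm.injective.comp
    (Pi.single_injective (M := fun _ => A⟦X⟧) 0)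

theorem ofSeries_apply (m : A⟦X⟧) (n : ℕ) :
    ofSeries A p m n = if p ∣ n then PowerSeries.coeff (n / p) m else 0 := by
  have h : Fin.ofNat p n = 0 ↔ p ∣ n := by
    rw [Fin.ext_iff, Fin.val_ofNat, Fin.val_zero, Nat.dvd_iff_mod_eq_zero]
  rw [← componentsEquiv_symm_single_zero, componentsEquiv_symm_apply, Pi.single_apply,
    apply_ite (PowerSeries.coeff (n / p)), map_zero]
  simp only [h]

theorem componentsEquiv_single (k : ℕ) (a : A) : componentsEquiv A p (Finsupp.single k a) =
    Pi.single (Fin.ofNat p k) (PowerSeries.monomial (k / p) a) := by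
  refine ((componentsEquiv A p).symm_apply_eq.1 ?_).symm
  ext1 n
  have h : k = n ↔ Fin.ofNat p n = Fin.ofNat p k ∧ n / p = k / p := by
    rw [Fin.ext_iff, Fin.val_ofNat, Fin.val_ofNat, and_comm, eq_comm, Nat.ext_div_mod_iff]
  simp only [componentsEquiv_symm_apply, Pi.single_apply, Finsupp.single_apply, h, ite_and,
    apply_ite (PowerSeries.coeff (n / p)), PowerSeries.coeff_monomial, map_zero]

end Semiring

variable {R : Type*} [CommRing R] {p : ℕ} [NeZero p]

theorem xpowD_eq_ofSeries (r : ℕ) :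
    xpowD R r = ofSeries R[X] p (PowerSeries.C (Polynomial.X ^ r)) := by
  ext1 n
  rw [ofSeries_apply, PowerSeries.coeff_C]
  unfold xpowD
  rcases eq_or_ne n 0 with rfl | hn
  · simp
  · rw [if_neg hn]
    split_ifs with hpn hdiv
    · exact absurd (Nat.eq_zero_of_dvd_of_div_eq_zero hpn hdiv) hn
    all_goals rfl

theorem oneD_eq_ofSeries : oneD R = ofSeries R[X] p 1 :=
  (funext fun n => by simp [oneD, xpowD]).trans (xpowD_eq_ofSeries 0)

theorem ofSeries_componentsEquiv_zero {f : ℕ → R[X]} (hf : f ∈ ZAhat R p) :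
    ofSeries R[X] p (componentsEquiv R[X] p f 0) = f := by
  ext1 n
  rw [ofSeries_apply]
  split_ifs with hn
  · rw [componentsEquiv_apply, PowerSeries.coeff_mk, Fin.val_zero, add_zero, Nat.div_mul_cancel hn]
  · exact (hf n hn).symm

theorem ofSeries_mem_ZAhat (m : R[X]⟦X⟧) : ofSeries R[X] p m ∈ ZAhat R p := fun n hn => by
  rw [ofSeries_apply, if_neg hn]

theorem oneD_mem_ZAhat : oneD R ∈ ZAhat R p := by
  rw [oneD_eq_ofSeries (p := p)]
  exact ofSeries_mem_ZAhat 1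

theorem mem_ZAhat_iff {f : ℕ → R[X]} : f ∈ ZAhat R p ↔ ∃ m, ofSeries R[X] p m = f :=
  ⟨fun hf => ⟨_, ofSeries_componentsEquiv_zero hf⟩, by rintro ⟨m, rfl⟩; exact ofSeries_mem_ZAhat m⟩

theorem ofSeries_mem_ZDhat_iff {m : R[X]⟦X⟧} :
    ofSeries R[X] p m ∈ ZDhat R p ↔ m ∈ expandedSeries R p := by
  rw [mem_expandedSeries]
  refine ⟨fun h k => ?_, fun h => ⟨ofSeries_mem_ZAhat m, fun n => ?_⟩⟩
  · simpa [ofSeries_apply, NeZero.pos p] using h.2 (k * p)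
  · rw [ofSeries_apply]
    split_ifs
    · exact h _
    · exact zero_mem _

theorem mem_ZDhat_iff {f : ℕ → R[X]} :
    f ∈ ZDhat R p ↔ ∃ z : expandedSeries R p, ofSeries R[X] p z = f := by
  constructor
  · intro hf
    obtain ⟨m, rfl⟩ := mem_ZAhat_iff.1 hf.1
    exact ⟨⟨m, ofSeries_mem_ZDhat_iff.1 hf⟩, rfl⟩
  · rintro ⟨z, rfl⟩
    exact ofSeries_mem_ZDhat_iff.2 z.2

end Components

/-! ### Transport of the product from the endomorphism ring -/

/-- A splitting of `D̂`: an action of its elements on `ẐA` which identifies `D̂` with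
`End_{ẐD}(ẐA)` and under which the elements of `ẐA` act by multiplication. -/
structure AzumayaSplitting (R : Type*) [CommRing R] (p : ℕ) [NeZero p] where
  /-- The action of `D̂` on `ẐA`. -/
  toEnd : (ℕ → R[X]) ≃ₗ[R] Module.End (expandedSeries R p) R[X]⟦X⟧
  toEnd_ofSeries (m : R[X]⟦X⟧) :
    toEnd (ofSeries R[X] p m) = Algebra.lmul (expandedSeries R p) R[X]⟦X⟧ m

namespace AzumayaSplitting

variable {R : Type*} [CommRing R] {p : ℕ} [NeZero p] (S : AzumayaSplitting R p)

/-- The product of `D̂` transported from `End_{ẐD}(ẐA)`. -/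
protected noncomputable def mul (f g : ℕ → R[X]) : ℕ → R[X] :=
  S.toEnd.symm (S.toEnd f * S.toEnd g)

theorem toEnd_mul (f g : ℕ → R[X]) : S.toEnd (S.mul f g) = S.toEnd f * S.toEnd g :=
  S.toEnd.apply_symm_apply _

protected theorem add_mul (f g h : ℕ → R[X]) : S.mul (f + g) h = S.mul f h + S.mul g h := by
  simp only [AzumayaSplitting.mul, map_add, add_mul]

protected theorem mul_add (f g h : ℕ → R[X]) : S.mul f (g + h) = S.mul f g + S.mul f h := by
  simp only [AzumayaSplitting.mul, map_add, mul_add]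

protected theorem smul_mul (r : R) (f g : ℕ → R[X]) : S.mul (r • f) g = r • S.mul f g := by
  simp only [AzumayaSplitting.mul, map_smul, smul_mul_assoc]

protected theorem mul_smul (r : R) (f g : ℕ → R[X]) : S.mul f (r • g) = r • S.mul f g := by
  simp only [AzumayaSplitting.mul, map_smul, mul_smul_comm]

protected theorem mul_assoc (f g h : ℕ → R[X]) : S.mul (S.mul f g) h = S.mul f (S.mul g h) :=
  S.toEnd.injective <| by simp only [toEnd_mul, mul_assoc]

theorem toEnd_oneD : S.toEnd (oneD R) = 1 := by
  rw [oneD_eq_ofSeries (p := p), toEnd_ofSeries, map_one]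

theorem oneD_mul (f : ℕ → R[X]) : S.mul (oneD R) f = f :=
  S.toEnd.injective <| by rw [toEnd_mul, toEnd_oneD, one_mul]

theorem mul_oneD (f : ℕ → R[X]) : S.mul f (oneD R) = f :=
  S.toEnd.injective <| by rw [toEnd_mul, toEnd_oneD, mul_one]

theorem ofSeries_mul_ofSeries (m n : R[X]⟦X⟧) :
    S.mul (ofSeries R[X] p m) (ofSeries R[X] p n) = ofSeries R[X] p (m * n) :=
  S.toEnd.injective <| by rw [toEnd_mul, toEnd_ofSeries, toEnd_ofSeries, toEnd_ofSeries, map_mul]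

theorem forall_mul_comm_iff_mem_ZDhat (f : ℕ → R[X]) :
    (∀ g, S.mul f g = S.mul g f) ↔ f ∈ ZDhat R p := by
  have := Module.Free.of_basis (xPowBasis R p)
  calc (∀ g, S.mul f g = S.mul g f)
      ↔ ∀ φ, S.toEnd f * φ = φ * S.toEnd f := by
        rw [S.toEnd.surjective.forall]
        simp only [← toEnd_mul, S.toEnd.injective.eq_iff]
    _ ↔ ∃ z, algebraMap (expandedSeries R p) _ z = S.toEnd f := by
        rw [← Set.mem_range, ← Algebra.mem_bot,
          ← Algebra.IsCentral.center_eq_bot (expandedSeries R p) (Module.End _ _),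
          Subalgebra.mem_center_iff]
        exact forall_congr' fun φ => eq_comm
    _ ↔ f ∈ ZDhat R p := by
        rw [mem_ZDhat_iff]
        refine exists_congr fun z => ?_
        rw [← S.toEnd.injective.eq_iff, toEnd_ofSeries]
        rfl

theorem mul_mem_ZAhat {f g : ℕ → R[X]} (hf : f ∈ ZAhat R p) (hg : g ∈ ZAhat R p) :
    S.mul f g ∈ ZAhat R p := by
  obtain ⟨m, rfl⟩ := mem_ZAhat_iff.1 hf
  obtain ⟨n, rfl⟩ := mem_ZAhat_iff.1 hg
  exact S.ofSeries_mul_ofSeries m n ▸ ofSeries_mem_ZAhat _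

theorem mul_comm_of_mem_ZAhat {f g : ℕ → R[X]} (hf : f ∈ ZAhat R p) (hg : g ∈ ZAhat R p) :
    S.mul f g = S.mul g f := by
  obtain ⟨m, rfl⟩ := mem_ZAhat_iff.1 hf
  obtain ⟨n, rfl⟩ := mem_ZAhat_iff.1 hg
  rw [ofSeries_mul_ofSeries, ofSeries_mul_ofSeries, mul_comm]

theorem sum_ofSeries_mul_xpowD (z : Fin p → expandedSeries R p) :
    ∑ r, S.mul (ofSeries R[X] p (z r)) (xpowD R r) =
      ofSeries R[X] p ((xPowBasis R p).equivFun.symm z) := by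
  simp only [xpowD_eq_ofSeries (p := p), ofSeries_mul_ofSeries, Module.Basis.equivFun_symm_apply,
    xPowBasis_apply, map_sum, Subalgebra.smul_def, smul_eq_mul]

theorem existsUnique_eq_sum_mul_xpowD {f : ℕ → R[X]} (hf : f ∈ ZAhat R p) :
    ∃! c : Fin p → ℕ → R[X], (∀ r, c r ∈ ZDhat R p) ∧ f = ∑ r, S.mul (c r) (xpowD R r) := by
  obtain ⟨m, rfl⟩ := mem_ZAhat_iff.1 hf
  refine ⟨fun r => ofSeries R[X] p ((xPowBasis R p).equivFun m r),
    ⟨fun r => ofSeries_mem_ZDhat_iff.2 (Subtype.coe_prop _), ?_⟩, ?_⟩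
  · rw [sum_ofSeries_mul_xpowD, LinearEquiv.symm_apply_apply]
  · rintro c ⟨hc, hsum⟩
    choose z hz using fun r => mem_ZDhat_iff.1 (hc r)
    obtain rfl : (fun r => ofSeries R[X] p (z r)) = c := funext hz
    rw [sum_ofSeries_mul_xpowD] at hsum
    rw [ofSeries_injective hsum, LinearEquiv.apply_symm_apply]

/-- The action of `D̂` on `ẐA`, extended to all of `D̂ = ⨁_{i<p} ẐA ∂^i` componentwise. -/
noncomputable def act (f v : ℕ → R[X]) : ℕ → R[X] :=
  (componentsEquiv R[X] p).symm fun i => S.toEnd f (componentsEquiv R[X] p v i)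

theorem act_ofSeries (f : ℕ → R[X]) (m : R[X]⟦X⟧) :
    S.act f (ofSeries R[X] p m) = ofSeries R[X] p (S.toEnd f m) := by
  rw [act, componentsEquiv_ofSeries, ← componentsEquiv_symm_single_zero]
  congr 1
  ext1 i
  exact Pi.apply_single (fun _ => S.toEnd f) (fun _ => map_zero _) 0 m i

theorem act_mem_ZAhat (f : ℕ → R[X]) {v : ℕ → R[X]} (hv : v ∈ ZAhat R p) :
    S.act f v ∈ ZAhat R p := by
  obtain ⟨m, rfl⟩ := mem_ZAhat_iff.1 hv
  exact S.act_ofSeries f m ▸ ofSeries_mem_ZAhat _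

theorem add_act (f g v : ℕ → R[X]) : S.act (f + g) v = S.act f v + S.act g v := by
  rw [act, act, act, ← map_add, map_add]
  rfl

theorem act_add (f v w : ℕ → R[X]) : S.act f (v + w) = S.act f v + S.act f w := by
  rw [act, act, act, ← map_add, map_add]
  simp only [Pi.add_apply, map_add]
  rfl

theorem smul_act (r : R) (f v : ℕ → R[X]) : S.act (r • f) v = r • S.act f v := by
  rw [act, map_smul]
  exact ((componentsEquiv R[X] p).symm.restrictScalars R).map_smul r _

theorem mul_act (f g v : ℕ → R[X]) : S.act (S.mul f g) v = S.act f (S.act g v) := by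
  simp only [act, toEnd_mul, LinearEquiv.apply_symm_apply, Module.End.mul_apply]

theorem oneD_act (v : ℕ → R[X]) : S.act (oneD R) v = v := by
  rw [act, toEnd_oneD]
  exact (componentsEquiv R[X] p).symm_apply_apply v

theorem act_mul_of_mem_ZDhat {z v : ℕ → R[X]} (f : ℕ → R[X]) (hz : z ∈ ZDhat R p)
    (hv : v ∈ ZAhat R p) : S.act f (S.mul z v) = S.mul z (S.act f v) := by
  obtain ⟨z, rfl⟩ := mem_ZDhat_iff.1 hz
  obtain ⟨m, rfl⟩ := mem_ZAhat_iff.1 hv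
  rw [ofSeries_mul_ofSeries, act_ofSeries, act_ofSeries, ofSeries_mul_ofSeries,
    ← smul_eq_mul, ← Subalgebra.smul_def, map_smul, Subalgebra.smul_def, smul_eq_mul]

theorem act_eq_mul {z v : ℕ → R[X]} (hz : z ∈ ZAhat R p) (hv : v ∈ ZAhat R p) :
    S.act z v = S.mul z v := by
  obtain ⟨n, rfl⟩ := mem_ZAhat_iff.1 hz
  obtain ⟨m, rfl⟩ := mem_ZAhat_iff.1 hv
  rw [act_ofSeries, toEnd_ofSeries, ofSeries_mul_ofSeries, Algebra.coe_lmul_eq_mul,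
    LinearMap.mul_apply']

theorem eq_zero_of_forall_act_eq_zero {f : ℕ → R[X]} (hf : ∀ v ∈ ZAhat R p, S.act f v = 0) :
    f = 0 := by
  refine S.toEnd.map_eq_zero_iff.1 (LinearMap.ext fun m => ofSeries_injective (p := p) ?_)
  rw [← act_ofSeries, hf _ (ofSeries_mem_ZAhat m), LinearMap.zero_apply, map_zero]

theorem exists_act_eq {φ : (ℕ → R[X]) → ℕ → R[X]} (hmem : ∀ v ∈ ZAhat R p, φ v ∈ ZAhat R p)
    (hadd : ∀ v w, v ∈ ZAhat R p → w ∈ ZAhat R p → φ (v + w) = φ v + φ w)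
    (hmul : ∀ z v, z ∈ ZDhat R p → v ∈ ZAhat R p → φ (S.mul z v) = S.mul z (φ v)) :
    ∃ f, ∀ v ∈ ZAhat R p, S.act f v = φ v := by
  choose ψ hψ using fun m => mem_ZAhat_iff.1 (hmem _ (ofSeries_mem_ZAhat m))
  let Ψ : Module.End (expandedSeries R p) R[X]⟦X⟧ :=
    { toFun := ψ
      map_add' := fun m n => ofSeries_injective (p := p) <| by
        rw [map_add, hψ, hψ, hψ, map_add, hadd _ _ (ofSeries_mem_ZAhat m) (ofSeries_mem_ZAhat n)]
      map_smul' := fun z m => ofSeries_injective (p := p) <| by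
        rw [RingHom.id_apply, Subalgebra.smul_def, Subalgebra.smul_def, smul_eq_mul, smul_eq_mul,
          ← S.ofSeries_mul_ofSeries, hψ, hψ, ← S.ofSeries_mul_ofSeries,
          hmul _ _ (ofSeries_mem_ZDhat_iff.2 z.2) (ofSeries_mem_ZAhat m)] }
  refine ⟨S.toEnd.symm Ψ, fun v hv => ?_⟩
  obtain ⟨m, rfl⟩ := mem_ZAhat_iff.1 hv
  rw [act_ofSeries, LinearEquiv.apply_symm_apply]
  exact hψ m

end AzumayaSplitting

/-! ### Comparison with the Ore extension -/

/-- `mul` is the multiplication of the Ore extension `A[∂; σ, δ]`, on its underlying left `A`-module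
`ℕ →₀ A` of finite sums `∑ a_k∂^k`. -/
structure IsOreMul {A : Type*} [Ring A] (σ δ : A → A)
    (mul : (ℕ →₀ A) → (ℕ →₀ A) → (ℕ →₀ A)) : Prop where
  protected add_mul (f g h : ℕ →₀ A) : mul (f + g) h = mul f h + mul g h
  protected mul_add (f g h : ℕ →₀ A) : mul f (g + h) = mul f g + mul f h
  protected mul_assoc (f g h : ℕ →₀ A) : mul (mul f g) h = mul f (mul g h)
  protected one_mul (f : ℕ →₀ A) : mul (.single 0 1) f = f
  protected smul_mul (a : A) (f g : ℕ →₀ A) : mul (a • f) g = a • mul f g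
  single_one_mul_single_one (k l : ℕ) : mul (.single k 1) (.single l 1) = .single (k + l) 1
  commutation (a : A) : mul (.single 1 1) (.single 0 a) = .single 1 (σ a) + .single 0 (δ a)

namespace IsOreMul

variable {A E : Type*} [Ring A] [Ring E] {σ δ : A → A} {mul : (ℕ →₀ A) → (ℕ →₀ A) → (ℕ →₀ A)}

theorem zero_left (h : IsOreMul σ δ mul) (f : ℕ →₀ A) : mul 0 f = 0 :=
  map_zero (AddMonoidHom.mk' (mul · f) fun g g' => h.add_mul g g' f)

theorem zero_right (h : IsOreMul σ δ mul) (f : ℕ →₀ A) : mul f 0 = 0 :=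
  map_zero (AddMonoidHom.mk' (mul f) (h.mul_add f))

theorem single_zero_mul (h : IsOreMul σ δ mul) (a : A) (f : ℕ →₀ A) :
    mul (.single 0 a) f = a • f := by
  rw [← Finsupp.smul_single_one, h.smul_mul, h.one_mul]

theorem single_mul_del (h : IsOreMul σ δ mul) (k : ℕ) (a : A) :
    mul (.single k a) (.single 1 1) = .single (k + 1) a := by
  rw [← Finsupp.smul_single_one, h.smul_mul, h.single_one_mul_single_one, Finsupp.smul_single_one]

theorem del_mul_single (h : IsOreMul σ δ mul) (l : ℕ) (b : A) :
    mul (.single 1 1) (.single l b) = .single (l + 1) (σ b) + .single l (δ b) := by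
  have hsplit : mul (.single 0 b) (.single l 1) = .single l b := by
    rw [h.single_zero_mul, Finsupp.smul_single_one]
  rw [← hsplit, ← h.mul_assoc, h.commutation, h.add_mul, h.single_zero_mul,
    Finsupp.smul_single_one, ← Finsupp.smul_single_one 1, h.smul_mul, h.single_one_mul_single_one,
    Finsupp.smul_single_one, add_comm 1 l]

variable {ρ : A →+* E} {d : E} {Φ : (ℕ →₀ A) →+ E}

theorem map_smul_of_map_single (hΦ : ∀ k a, Φ (.single k a) = ρ a * d ^ k) (a : A) (f : ℕ →₀ A) :
    Φ (a • f) = ρ a * Φ f := by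
  induction f using Finsupp.induction_linear with
  | zero => rw [smul_zero, map_zero, mul_zero]
  | add f g hf hg => rw [smul_add, map_add, map_add, hf, hg, mul_add]
  | single k b => rw [Finsupp.smul_single, smul_eq_mul, hΦ, hΦ, map_mul, mul_assoc]

theorem map_del_mul (h : IsOreMul σ δ mul) (hd : ∀ a, d * ρ a = ρ (σ a) * d + ρ (δ a))
    (hΦ : ∀ k a, Φ (.single k a) = ρ a * d ^ k) (g : ℕ →₀ A) :
    Φ (mul (.single 1 1) g) = d * Φ g := by
  induction g using Finsupp.induction_linear with
  | zero => rw [h.zero_right, map_zero, mul_zero]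
  | add f g hf hg => rw [h.mul_add, map_add, map_add, hf, hg, mul_add]
  | single l b =>
    rw [h.del_mul_single, map_add, hΦ, hΦ, hΦ, ← mul_assoc, hd, add_mul, pow_succ', mul_assoc]

theorem map_mul_of_map_single (h : IsOreMul σ δ mul)
    (hd : ∀ a, d * ρ a = ρ (σ a) * d + ρ (δ a))
    (hΦ : ∀ k a, Φ (.single k a) = ρ a * d ^ k) (f g : ℕ →₀ A) : Φ (mul f g) = Φ f * Φ g := by
  induction f using Finsupp.induction_linear with
  | zero => rw [h.zero_left, map_zero, zero_mul]
  | add f f' hf hf' => rw [h.add_mul, map_add, map_add, hf, hf', add_mul]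
  | single k a =>
    induction k generalizing g with
    | zero => rw [h.single_zero_mul, map_smul_of_map_single hΦ, hΦ, pow_zero, mul_one]
    | succ k ih =>
      rw [← h.single_mul_del, h.mul_assoc, ih, h.map_del_mul hd hΦ, h.single_mul_del, hΦ, hΦ,
        pow_succ, mul_assoc, mul_assoc, mul_assoc]

end IsOreMul

section Splitting

variable {R : Type*} [CommRing R] {q : R} {σ : R[X] →ₐ[R] R[X]} {D : R[X] →ₗ[R] R[X]} {p : ℕ}
  [NeZero p]

theorem IsQDerivation.exists_azumayaSplitting_toEnd_single (hD : IsQDerivation q σ D)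
    (hpq : qInt q p = 0) (hunit : ∀ m, 0 < m → m < p → IsUnit (qInt q m)) :
    ∃ (S : AzumayaSplitting R p) (h : R[X]⟦X⟧), ∀ (k : ℕ) (a : R[X]),
      S.toEnd (Finsupp.single k a) =
        Algebra.lmul (expandedSeries R p) R[X]⟦X⟧ (PowerSeries.C a) * hD.deform hpq h ^ k := by
  obtain ⟨h, h₀, hX⟩ := hD.exists_deform_pow_eq_lmul_X hpq hunit
  obtain ⟨b, hb⟩ := hD.exists_basis_deform_pow hpq hunit h₀
  let Θ : (ℕ → R[X]) ≃ₗ[R] Module.End (expandedSeries R p) R[X]⟦X⟧ :=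
    (componentsEquiv R[X] p).restrictScalars R ≪≫ₗ b.equivFun.symm.restrictScalars R
  have Θ_of_components {f : ℕ → R[X]} {i : Fin p} {m : R[X]⟦X⟧}
      (hf : componentsEquiv R[X] p f = Pi.single i m) :
      Θ f = Algebra.lmul (expandedSeries R p) R[X]⟦X⟧ m * hD.deform hpq h ^ (i : ℕ) :=
    calc Θ f = b.equivFun.symm (Pi.single i m) := congrArg b.equivFun.symm hf
      _ = m • b i := by
        rw [Module.Basis.equivFun_symm_apply, Fintype.sum_eq_single i, Pi.single_eq_same]
        intro j hj
        rw [Pi.single_eq_of_ne hj, zero_smul]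
      _ = Algebra.lmul (expandedSeries R p) R[X]⟦X⟧ m * hD.deform hpq h ^ (i : ℕ) := by
        rw [hb]
        rfl
  refine ⟨⟨Θ, fun m => ?_⟩, h, fun k a => ?_⟩
  · rw [Θ_of_components (componentsEquiv_ofSeries m), Fin.val_zero, pow_zero, mul_one]
  · rw [Θ_of_components (componentsEquiv_single k a), PowerSeries.monomial_eq_C_mul_X_pow, map_mul,
      map_pow, ← hX, ← pow_mul, mul_assoc, ← pow_add, Fin.val_ofNat, Nat.div_add_mod]

theorem IsQDerivation.exists_azumayaSplitting (hD : IsQDerivation q σ D) (hpq : qInt q p = 0)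
    (hunit : ∀ m, 0 < m → m < p → IsUnit (qInt q m))
    {omul : (ℕ →₀ R[X]) → (ℕ →₀ R[X]) → (ℕ →₀ R[X])} (ho : IsOreMul σ D omul) :
    ∃ S : AzumayaSplitting R p, ∀ f g : ℕ →₀ R[X], S.mul f g = omul f g := by
  obtain ⟨S, h, hS⟩ := hD.exists_azumayaSplitting_toEnd_single hpq hunit
  let ρ : R[X] →+* Module.End (expandedSeries R p) R[X]⟦X⟧ :=
    (Algebra.lmul (expandedSeries R p) R[X]⟦X⟧).toRingHom.comp PowerSeries.C
  let Φ : (ℕ →₀ R[X]) →+ Module.End (expandedSeries R p) R[X]⟦X⟧ :=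
    S.toEnd.toAddEquiv.toAddMonoidHom.comp Finsupp.coeFnAddHom
  have hmul (f g : ℕ →₀ R[X]) : Φ (omul f g) = Φ f * Φ g :=
    ho.map_mul_of_map_single (ρ := ρ) (hD.deform_mul_lmul_C hpq (h := h)) hS f g
  exact ⟨S, fun f g => S.toEnd.injective ((S.toEnd_mul f g).trans (hmul f g).symm)⟩

end Splitting

theorem azumaya_splitting_completed_q_differential_operators_general
    (p : ℕ) [NeZero p] (R : Type*) [CommRing R] (q : R) (hpq : qInt q p = 0)
    (hunit : ∀ m : ℕ, 0 < m → m < p → IsUnit (qInt q m))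
    (σ : Polynomial R →ₐ[R] Polynomial R)
    (hσ : σ Polynomial.X = Polynomial.C q * Polynomial.X)
    (D : Polynomial R →ₗ[R] Polynomial R)
    (hD : ∀ n : ℕ, D (Polynomial.X ^ n) = qInt q n • Polynomial.X ^ (n - 1))
    (omul : (ℕ →₀ Polynomial R) → (ℕ →₀ Polynomial R) → (ℕ →₀ Polynomial R))
    (homul : IsOreMul σ D omul) :
    ∃ mul : (ℕ → Polynomial R) → (ℕ → Polynomial R) → (ℕ → Polynomial R),
      (∀ f g h : ℕ → Polynomial R, mul (f + g) h = mul f h + mul g h) ∧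
      (∀ f g h : ℕ → Polynomial R, mul f (g + h) = mul f g + mul f h) ∧
      (∀ (r : R) (f g : ℕ → Polynomial R), mul (r • f) g = r • mul f g) ∧
      (∀ (r : R) (f g : ℕ → Polynomial R), mul f (r • g) = r • mul f g) ∧
      (∀ f g h : ℕ → Polynomial R, mul (mul f g) h = mul f (mul g h)) ∧
      (∀ f : ℕ → Polynomial R, mul (oneD R) f = f) ∧
      (∀ f : ℕ → Polynomial R, mul f (oneD R) = f) ∧
      (∀ f g : ℕ →₀ Polynomial R, mul (⇑f) (⇑g) = ⇑(omul f g)) ∧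
      (∀ f : ℕ → Polynomial R,
        (∀ g : ℕ → Polynomial R, mul f g = mul g f) ↔ f ∈ ZDhat R p) ∧
      (∀ f g : ℕ → Polynomial R, f ∈ ZAhat R p → g ∈ ZAhat R p → mul f g ∈ ZAhat R p) ∧
      (∀ f g : ℕ → Polynomial R, f ∈ ZAhat R p → g ∈ ZAhat R p → mul f g = mul g f) ∧
      (oneD R ∈ ZAhat R p) ∧
      (∀ f : ℕ → Polynomial R, f ∈ ZAhat R p →
        ∃! c : Fin p → (ℕ → Polynomial R),
          (∀ r : Fin p, c r ∈ ZDhat R p) ∧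
          f = ∑ r : Fin p, mul (c r) (xpowD R (r : ℕ))) ∧
      (∃ act : (ℕ → Polynomial R) → (ℕ → Polynomial R) → (ℕ → Polynomial R),
        (∀ f v, v ∈ ZAhat R p → act f v ∈ ZAhat R p) ∧
        (∀ f g v, act (f + g) v = act f v + act g v) ∧
        (∀ f v w, act f (v + w) = act f v + act f w) ∧
        (∀ (r : R) (f v : ℕ → Polynomial R), act (r • f) v = r • act f v) ∧
        (∀ f g v, act (mul f g) v = act f (act g v)) ∧
        (∀ v, act (oneD R) v = v) ∧
        (∀ z f v, z ∈ ZDhat R p → v ∈ ZAhat R p → act f (mul z v) = mul z (act f v)) ∧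
        (∀ z v, z ∈ ZDhat R p → v ∈ ZAhat R p → act z v = mul z v) ∧
        (∀ f : ℕ → Polynomial R, (∀ v ∈ ZAhat R p, act f v = 0) → f = 0) ∧
        (∀ φ : (ℕ → Polynomial R) → (ℕ → Polynomial R),
          (∀ v ∈ ZAhat R p, φ v ∈ ZAhat R p) →
          (∀ v w, v ∈ ZAhat R p → w ∈ ZAhat R p → φ (v + w) = φ v + φ w) →
          (∀ z v, z ∈ ZDhat R p → v ∈ ZAhat R p → φ (mul z v) = mul z (φ v)) →
          ∃ f : ℕ → Polynomial R, ∀ v ∈ ZAhat R p, act f v = φ v)) := by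
  obtain ⟨S, hS⟩ := IsQDerivation.exists_azumayaSplitting ⟨hσ, hD⟩ hpq hunit homul
  exact ⟨S.mul, S.add_mul, S.mul_add, S.smul_mul, S.mul_smul, S.mul_assoc, S.oneD_mul, S.mul_oneD,
    hS, S.forall_mul_comm_iff_mem_ZDhat, fun _ _ => S.mul_mem_ZAhat,
    fun _ _ => S.mul_comm_of_mem_ZAhat, oneD_mem_ZAhat, fun _ => S.existsUnique_eq_sum_mul_xpowD,
    S.act, fun f _ => S.act_mem_ZAhat f, S.add_act, S.act_add, S.smul_act, S.mul_act, S.oneD_act,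
    fun _ f _ => S.act_mul_of_mem_ZDhat f, fun _ _ hz => S.act_eq_mul hz.1,
    fun _ => S.eq_zero_of_forall_act_eq_zero, fun _ => S.exists_act_eq⟩

/-- Azumaya splitting of the completed ring of `q`-twisted differential
operators over its center: let `p` be a prime, `R` a nontrivial commutative ring,
`q ∈ R` with `(p)_q = 0` and `R` `q`-divisible; `A = R[x]`, `σ(x) = qx`,
`∂_σ(x^n) = (n)_q x^{n−1}` and `D = D_{A,σ}` the Ore extension (axiomatized below by its
multiplication `omul` on `ℕ →₀ A`).  Then:
(a) the multiplication of `D` extends to the set `D̂ = ℕ → A` of formal series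
`Σ_k a_k∂^k`, making `D̂` an `R`-algebra containing `D`;
(b) `ẐD` is the center of `D̂`, and `ẐA` is a commutative subring of `D̂` which is a free
`ẐD`-module of rank `p` with basis `1, x, …, x^{p−1}`;
(c) there is an isomorphism of `R`-algebras `D̂ ≅ End_{ẐD}(ẐA)` (encoded below by a
faithful action `act` of `D̂` on `ẐA` by `ẐD`-linear endomorphisms, hitting every
`ẐD`-linear endomorphism) under which each central element acts as multiplication by
itself. -/
theorem azumaya_splitting_completed_q_differential_operators
    (p : ℕ) (hp : p.Prime)
    (R : Type*) [CommRing R] [Nontrivial R] (q : R)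
    (hpq : qInt q p = 0)
    (hdiv : ∀ m : ℕ, 1 ≤ m → qInt q m ≠ 0 → IsUnit (qInt q m))
    (σ : Polynomial R →ₐ[R] Polynomial R)
    (hσ : σ Polynomial.X = Polynomial.C q * Polynomial.X)
    (D : Polynomial R →ₗ[R] Polynomial R)
    (hD : ∀ n : ℕ, D (Polynomial.X ^ n) = qInt q n • Polynomial.X ^ (n - 1))
    -- the Ore extension multiplication on `D = ℕ →₀ R[x]`
    (omul : (ℕ →₀ Polynomial R) → (ℕ →₀ Polynomial R) → (ℕ →₀ Polynomial R))
    (hadd₁ : ∀ f g h : ℕ →₀ Polynomial R, omul (f + g) h = omul f h + omul g h)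
    (hadd₂ : ∀ f g h : ℕ →₀ Polynomial R, omul f (g + h) = omul f g + omul f h)
    (hassoc : ∀ f g h : ℕ →₀ Polynomial R, omul (omul f g) h = omul f (omul g h))
    (hone₁ : ∀ f : ℕ →₀ Polynomial R, omul (Finsupp.single 0 1) f = f)
    (hone₂ : ∀ f : ℕ →₀ Polynomial R, omul f (Finsupp.single 0 1) = f)
    (hA : ∀ a b : Polynomial R,
      omul (Finsupp.single 0 a) (Finsupp.single 0 b) = Finsupp.single 0 (a * b))
    (hsmul : ∀ (a : Polynomial R) (f g : ℕ →₀ Polynomial R), omul (a • f) g = a • omul f g)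
    (hpow : ∀ k l : ℕ, omul (Finsupp.single k 1) (Finsupp.single l 1) =
      Finsupp.single (k + l) 1)
    (hcomm : ∀ a : Polynomial R, omul (Finsupp.single 1 1) (Finsupp.single 0 a) =
      Finsupp.single 1 (σ a) + Finsupp.single 0 (D a)) :
    ∃ mul : (ℕ → Polynomial R) → (ℕ → Polynomial R) → (ℕ → Polynomial R),
      -- (a) `D̂` is an `R`-algebra …
      (∀ f g h : ℕ → Polynomial R, mul (f + g) h = mul f h + mul g h) ∧
      (∀ f g h : ℕ → Polynomial R, mul f (g + h) = mul f g + mul f h) ∧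
      (∀ (r : R) (f g : ℕ → Polynomial R), mul (r • f) g = r • mul f g) ∧
      (∀ (r : R) (f g : ℕ → Polynomial R), mul f (r • g) = r • mul f g) ∧
      (∀ f g h : ℕ → Polynomial R, mul (mul f g) h = mul f (mul g h)) ∧
      (∀ f : ℕ → Polynomial R, mul (oneD R) f = f) ∧
      (∀ f : ℕ → Polynomial R, mul f (oneD R) = f) ∧
      -- … containing `D`, i.e. `mul` extends the multiplication of `D`
      (∀ f g : ℕ →₀ Polynomial R, mul (⇑f) (⇑g) = ⇑(omul f g)) ∧
      -- (b) `ẐD` is the center of `D̂` …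
      (∀ f : ℕ → Polynomial R,
        (∀ g : ℕ → Polynomial R, mul f g = mul g f) ↔ f ∈ ZDhat R p) ∧
      -- … `ẐA` is a commutative subring …
      (∀ f g : ℕ → Polynomial R, f ∈ ZAhat R p → g ∈ ZAhat R p → mul f g ∈ ZAhat R p) ∧
      (∀ f g : ℕ → Polynomial R, f ∈ ZAhat R p → g ∈ ZAhat R p → mul f g = mul g f) ∧
      (oneD R ∈ ZAhat R p) ∧
      -- … and a free `ẐD`-module of rank `p` with basis `1, x, …, x^{p−1}`
      (∀ f : ℕ → Polynomial R, f ∈ ZAhat R p →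
        ∃! c : Fin p → (ℕ → Polynomial R),
          (∀ r : Fin p, c r ∈ ZDhat R p) ∧
          f = ∑ r : Fin p, mul (c r) (xpowD R (r : ℕ))) ∧
      -- (c) the `R`-algebra isomorphism `D̂ ≅ End_{ẐD}(ẐA)`
      (∃ act : (ℕ → Polynomial R) → (ℕ → Polynomial R) → (ℕ → Polynomial R),
        (∀ f v, v ∈ ZAhat R p → act f v ∈ ZAhat R p) ∧
        (∀ f g v, act (f + g) v = act f v + act g v) ∧
        (∀ f v w, act f (v + w) = act f v + act f w) ∧
        (∀ (r : R) (f v : ℕ → Polynomial R), act (r • f) v = r • act f v) ∧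
        (∀ f g v, act (mul f g) v = act f (act g v)) ∧
        (∀ v, act (oneD R) v = v) ∧
        (∀ z f v, z ∈ ZDhat R p → v ∈ ZAhat R p → act f (mul z v) = mul z (act f v)) ∧
        -- each central element corresponds to multiplication by itself
        (∀ z v, z ∈ ZDhat R p → v ∈ ZAhat R p → act z v = mul z v) ∧
        -- injectivity
        (∀ f : ℕ → Polynomial R, (∀ v ∈ ZAhat R p, act f v = 0) → f = 0) ∧
        -- surjectivity onto the `ẐD`-linear endomorphisms of `ẐA`
        (∀ φ : (ℕ → Polynomial R) → (ℕ → Polynomial R),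
          (∀ v ∈ ZAhat R p, φ v ∈ ZAhat R p) →
          (∀ v w, v ∈ ZAhat R p → w ∈ ZAhat R p → φ (v + w) = φ v + φ w) →
          (∀ z v, z ∈ ZDhat R p → v ∈ ZAhat R p → φ (mul z v) = mul z (φ v)) →
          ∃ f : ℕ → Polynomial R, ∀ v ∈ ZAhat R p, act f v = φ v)) := by
  have : NeZero p := ⟨hp.ne_zero⟩
  have hunit (m : ℕ) (h₀ : 0 < m) (hm : m < p) : IsUnit (qInt q m) :=
    hdiv m h₀ (qInt_ne_zero_of_coprime (Nat.coprime_of_lt_prime h₀.ne' hm hp).symm hpq)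
  exact azumaya_splitting_completed_q_differential_operators_general p R q hpq hunit σ hσ D hD omul
    ⟨hadd₁, hadd₂, hassoc, hone₁, hsmul, hpow, hcomm⟩
end
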